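/- arXiv:math/0305242 — 2 statements merged into one kernel-verified Lean document; each statement's English description precedes it below -/
import Mathlib

section
/- Let C ⊂ ℙ²(ℂ) be the cuspidal cubic defined by x³ − y²z = 0, whose unique singular point is the cusp (0:0:1), and let C⁰ = C \ {(0:0:1)}. Then the map φ : ℂ → C⁰ given by φ(s) = (s : 1 : s³) is a bijection, and for all pairwise distinct s, t, u ∈ ℂ, the three points φ(s), φ(t), φ(u) are collinear if and only if s + t + u = 0. (Thus the collinearity relation makes C⁰ a group isomorphic to the additive group ℂ.) -/
/-- The complex projective plane ℙ²(ℂ) = ℙ(ℂ³). -/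
abbrev P2 : Type := Projectivization ℂ (Fin 3 → ℂ)

/-- Three points of ℙ²(ℂ) are collinear if representative vectors in ℂ³ span a linear
subspace of dimension at most 2. -/
def Collin (p q r : P2) : Prop :=
  Module.finrank ℂ (Submodule.span ℂ {p.rep, q.rep, r.rep} : Submodule ℂ (Fin 3 → ℂ)) ≤ 2

lemma vec_ne_zero {a b c : ℂ} (h : a ≠ 0 ∨ b ≠ 0 ∨ c ≠ 0) : ![a, b, c] ≠ 0 := by
  intro hz
  rcases h with h | h | h
  · exact h (by simpa using congrFun hz 0)
  · exact h (by simpa using congrFun hz 1)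
  · exact h (by simpa using congrFun hz 2)

/-- The cuspidal cubic x³ − y²z = 0 in ℙ²(ℂ). -/
def cuspCubic : Set P2 := {p | p.rep 0 ^ 3 - p.rep 1 ^ 2 * p.rep 2 = 0}

/-- The cusp (0:0:1) of the cuspidal cubic. -/
noncomputable def cuspPt : P2 :=
  Projectivization.mk ℂ ![0, 0, 1] (vec_ne_zero (Or.inr (Or.inr one_ne_zero)))

/-- The parametrization φ(s) = (s : 1 : s³) of the smooth points of the cuspidal cubic. -/
noncomputable def cuspParam (s : ℂ) : P2 :=
  Projectivization.mk ℂ ![s, 1, s ^ 3] (vec_ne_zero (Or.inr (Or.inl one_ne_zero)))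

/-!
The rows `(s, 1, s³)`, `(t, 1, t³)`, `(u, 1, u³)` form a generalized Vandermonde matrix: its
determinant is alternating of degree four, hence the Vandermonde product times a linear symmetric
form, and that form is `s + t + u`. So three distinct points of the parametrized curve are
collinear exactly when their parameters add up to zero. The parametrization is inverted by
`(x : y : z) ↦ x / y`, and the cusp is the only point of the curve with `y = 0`.
-/

open scoped LinearAlgebra.Projectivization
open Projectivization

section Collinearity

variable {K V : Type*} [DivisionRing K] [AddCommGroup V] [Module K V]

lemma isCollinear_iff_finrank_span_rep_le_two {S : Set (ℙ K V)} (hS : S.Finite) :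
    IsCollinear S ↔ Module.finrank K (Submodule.span K (Projectivization.rep '' S)) ≤ 2 := by
  constructor
  · rintro ⟨M, _, hM, hSM⟩
    have span_le : Submodule.span K (Projectivization.rep '' S) ≤ M.submodule := by
      rw [Submodule.span_le, Set.image_subset_iff]
      intro p hp
      refine (Subspace.mem_submodule_iff M p.rep_nonzero).2 ?_
      rw [p.mk_rep]
      exact hSM hp
    exact (Submodule.finrank_mono span_le).trans hM
  · intro h
    refine ⟨(Submodule.span K (Projectivization.rep '' S)).projectivization, ?_, ?_, ?_⟩
    · rw [Subspace.submodule.apply_symm_apply]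
      exact Module.Finite.span_of_finite K (hS.image _)
    · rwa [Subspace.submodule.apply_symm_apply]
    · intro p hp
      rw [← p.mk_rep, SetLike.mem_coe, Submodule.mk_mem_projectivization_iff]
      exact Submodule.subset_span (Set.mem_image_of_mem _ hp)

lemma isCollinear_range_iff_dependent (p : Fin 3 → ℙ K V) :
    IsCollinear (Set.range p) ↔ Dependent p := by
  rw [isCollinear_iff_finrank_span_rep_le_two (Set.finite_range p), dependent_iff,
    linearIndependent_iff_card_le_finrank_span, ← Set.range_comp, Fintype.card_fin, not_le,
    Nat.lt_succ_iff, Set.finrank]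

lemma dependent_mk_iff_not_linearIndependent {ι : Type*} {v : ι → V} (hv : ∀ i, v i ≠ 0) :
    Dependent (fun i ↦ mk K (v i) (hv i)) ↔ ¬ LinearIndependent K v :=
  ⟨fun h hli ↦ dependent_iff_not_independent.1 h (.mk v hv hli), .mk v hv⟩

end Collinearity

lemma collin_iff_isCollinear (p q r : P2) : Collin p q r ↔ IsCollinear {p, q, r} := by
  rw [isCollinear_iff_finrank_span_rep_le_two (Set.toFinite _), Set.image_insert_eq,
    Set.image_pair, Collin]

lemma isCollinear_mk_triple_iff_det_eq_zero {K : Type*} [Field K] {u v w : Fin 3 → K}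
    (hu : u ≠ 0) (hv : v ≠ 0) (hw : w ≠ 0) :
    IsCollinear {mk K u hu, mk K v hv, mk K w hw} ↔ (Matrix.of ![u, v, w]).det = 0 := by
  have row_ne_zero : ∀ i, (Matrix.of ![u, v, w]).row i ≠ 0 :=
    Fin.forall_fin_succ.2 ⟨hu, Fin.forall_fin_two.2 ⟨hv, hw⟩⟩
  have range_rows : {mk K u hu, mk K v hv, mk K w hw} =
      Set.range fun i ↦ mk K ((Matrix.of ![u, v, w]).row i) (row_ne_zero i) := by
    ext p
    simp only [Set.mem_insert_iff, Set.mem_singleton_iff, Set.mem_range, Fin.exists_fin_succ,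
      Fin.exists_fin_zero, or_false, eq_comm (a := p)]
    rfl
  rw [range_rows, isCollinear_range_iff_dependent, dependent_mk_iff_not_linearIndependent,
    Matrix.linearIndependent_rows_iff_isUnit, Matrix.isUnit_iff_isUnit_det, isUnit_iff_ne_zero,
    not_not]

lemma det_cubic_vandermonde {R : Type*} [CommRing R] (s t u : R) :
    Matrix.det !![s, 1, s ^ 3; t, 1, t ^ 3; u, 1, u ^ 3] =
      (s - t) * (s - u) * (t - u) * (s + t + u) := by
  simp only [Matrix.det_fin_three, Matrix.of_apply, Matrix.cons_val]
  ring

/-- The cuspidal cubic `x³ - y²z = 0` in the projective plane over an arbitrary field. The equation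
is imposed on the chosen representative of each point; `cuspidalCubic.mk_mem_iff` shows that
the choice is immaterial. -/
def cuspidalCubic (K : Type*) [Field K] : Set (ℙ K (Fin 3 → K)) :=
  {p | p.rep 0 ^ 3 - p.rep 1 ^ 2 * p.rep 2 = 0}

namespace cuspidalCubic

variable (K : Type*) [Field K]

/-- The cusp `(0 : 0 : 1)` of the cuspidal cubic over `K`. -/
def cusp : ℙ K (Fin 3 → K) :=
  mk K ![0, 0, 1] fun h ↦ one_ne_zero (congrFun h 2)

/-- The parametrization `s ↦ (s : 1 : s³)` of the cuspidal cubic over `K` minus its cusp. -/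
def param (s : K) : ℙ K (Fin 3 → K) :=
  mk K ![s, 1, s ^ 3] fun h ↦ one_ne_zero (congrFun h 1)

variable {K}

lemma mk_mem_iff {v : Fin 3 → K} (hv : v ≠ 0) :
    mk K v hv ∈ cuspidalCubic K ↔ v 0 ^ 3 - v 1 ^ 2 * v 2 = 0 := by
  obtain ⟨a, ha⟩ := exists_smul_eq_mk_rep K v hv
  have scaling : (a • v) 0 ^ 3 - (a • v) 1 ^ 2 * (a • v) 2 =
      (a : K) ^ 3 * (v 0 ^ 3 - v 1 ^ 2 * v 2) := by
    simp only [Pi.smul_apply, Units.smul_def, smul_eq_mul]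
    ring
  rw [cuspidalCubic, Set.mem_ofPred_eq, ← ha, scaling,
    mul_eq_zero_iff_left (pow_ne_zero 3 a.ne_zero)]

lemma mk_eq_cusp_iff {v : Fin 3 → K} (hv : v ≠ 0) :
    mk K v hv = cusp K ↔ v 0 = 0 ∧ v 1 = 0 := by
  rw [cusp, mk_eq_mk_iff']
  constructor
  · rintro ⟨a, rfl⟩
    simp
  · rintro ⟨h0, h1⟩
    refine ⟨v 2, ?_⟩
    ext i
    fin_cases i <;> simp [h0, h1]

lemma mk_eq_param_iff {v : Fin 3 → K} (hv : v ≠ 0) (s : K) :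
    mk K v hv = param K s ↔ v 0 = v 1 * s ∧ v 2 = v 1 * s ^ 3 := by
  rw [param, mk_eq_mk_iff']
  constructor
  · rintro ⟨a, rfl⟩
    simp
  · rintro ⟨h0, h2⟩
    refine ⟨v 1, ?_⟩
    ext i
    fin_cases i <;> simp [h0, h2]

lemma mk_eq_cusp_iff_of_mem {v : Fin 3 → K} (hv : v ≠ 0) (hC : mk K v hv ∈ cuspidalCubic K) :
    mk K v hv = cusp K ↔ v 1 = 0 := by
  rw [mk_eq_cusp_iff, and_iff_right_iff_imp]
  intro h1
  simpa [h1] using (mk_mem_iff hv).1 hC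

lemma param_injective : Function.Injective (param K) := by
  intro s t h
  simpa using ((mk_eq_param_iff _ t).1 h).1

lemma param_mem (s : K) : param K s ∈ cuspidalCubic K :=
  (mk_mem_iff _).2 (by simp)

lemma param_ne_cusp (s : K) : param K s ≠ cusp K := by
  simp [param, mk_eq_cusp_iff]

lemma range_param : Set.range (param K) = cuspidalCubic K \ {cusp K} := by
  refine Set.Subset.antisymm ?_ ?_
  · rintro _ ⟨s, rfl⟩
    exact ⟨param_mem s, param_ne_cusp s⟩
  · intro p
    induction p using Projectivization.ind with | h v hv =>
    rintro ⟨hC, hcusp⟩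
    have hy : v 1 ≠ 0 := fun h ↦ hcusp ((mk_eq_cusp_iff_of_mem hv hC).2 h)
    have hxyz := (mk_mem_iff hv).1 hC
    refine ⟨v 0 / v 1, ((mk_eq_param_iff hv _).2 ⟨?_, ?_⟩).symm⟩
    · field_simp
    · field_simp
      linear_combination -hxyz

lemma isCollinear_param_iff (s t u : K) :
    IsCollinear {param K s, param K t, param K u} ↔ s = t ∨ s = u ∨ t = u ∨ s + t + u = 0 := by
  simp only [param, isCollinear_mk_triple_iff_det_eq_zero, det_cubic_vandermonde, mul_eq_zero,
    sub_eq_zero, or_assoc]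

end cuspidalCubic

open cuspidalCubic in
theorem cuspidal_cubic_group_law_general (K : Type*) [Field K] :
    Function.Injective (param K) ∧ Set.range (param K) = cuspidalCubic K \ {cusp K} ∧
      ∀ s t u : K, s ≠ t → s ≠ u → t ≠ u →
        (IsCollinear {param K s, param K t, param K u} ↔ s + t + u = 0) := by
  refine ⟨param_injective, range_param, fun s t u hst hsu htu ↦ ?_⟩
  simp only [isCollinear_param_iff, hst, hsu, htu, false_or]

/-- φ(s) = (s : 1 : s³) is a bijection of ℂ onto the set of smooth points
of the cuspidal cubic x³ − y²z = 0, and for pairwise distinct s, t, u the points φ s,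
φ t, φ u are collinear iff s + t + u = 0. -/
theorem cuspidal_cubic_group_law :
    Function.Injective cuspParam ∧ Set.range cuspParam = cuspCubic \ {cuspPt} ∧
      ∀ s t u : ℂ, s ≠ t → s ≠ u → t ≠ u →
        (Collin (cuspParam s) (cuspParam t) (cuspParam u) ↔ s + t + u = 0) := by
  simp only [collin_iff_isCollinear]
  exact cuspidal_cubic_group_law_general ℂ
end

section
/- Let Q ⊂ ℙ²(ℂ) be the smooth conic x² + y² − z² = 0 and L the line z = 0, which meets Q in the two points (1:i:0) and (1:−i:0). Set Q⁰ = Q \ L and L⁰ = L \ Q. Then the maps φ₁ : ℂ* → Q⁰, φ₁(s) = (1+s² : i(1−s²) : 2s), and φ₂ : ℂ* → L⁰, φ₂(s) = (1−s : i(1+s) : 0), are bijections, and for all s, t ∈ ℂ* with s ≠ t and all u ∈ ℂ*, the three points φ₁(s), φ₁(t), φ₂(u) are collinear if and only if u = s·t. (Thus collinearity gives a pairing Q⁰ × Q⁰ → L⁰ corresponding to multiplication in ℂ*.) -/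
/-- The smooth conic x² + y² − z² = 0 in ℙ²(ℂ). -/
def conicQ : Set P2 := {p | p.rep 0 ^ 2 + p.rep 1 ^ 2 - p.rep 2 ^ 2 = 0}

/-- The line z = 0 in ℙ²(ℂ). -/
def lineZ : Set P2 := {p | p.rep 2 = 0}

/-- The parametrization φ₁(s) = (1+s² : i(1−s²) : 2s) of Q⁰ = Q \ L. -/
noncomputable def conicParam (s : ℂˣ) : P2 :=
  Projectivization.mk ℂ ![1 + (s : ℂ) ^ 2, Complex.I * (1 - (s : ℂ) ^ 2), 2 * (s : ℂ)]
    (vec_ne_zero (Or.inr (Or.inr (mul_ne_zero two_ne_zero s.ne_zero))))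

/-- The parametrization φ₂(s) = (1−s : i(1+s) : 0) of L⁰ = L \ Q. -/
noncomputable def lineZParam (s : ℂˣ) : P2 :=
  Projectivization.mk ℂ ![1 - (s : ℂ), Complex.I * (1 + (s : ℂ)), 0] (by
    intro hz
    have h0 : (1 : ℂ) - (s : ℂ) = 0 := by simpa using congrFun hz 0
    have h1 : Complex.I * (1 + (s : ℂ)) = 0 := by simpa using congrFun hz 1
    have hs : (s : ℂ) = 1 := by linear_combination -h0
    rw [hs] at h1
    simp [Complex.I_ne_zero] at h1)

/-! Removing from `ℙ²(ℂ)` the tangent `x = iy` to the conic at `(1 : -i : 0)` leaves an affine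
plane with coordinates `a = (x + iy) / (x - iy)` and `c = z / (x - iy)`. That tangent meets the
conic and the line only in their common point `(1 : -i : 0)`, so nothing of `Q⁰` or `L⁰` is lost.
In this plane the conic is the parabola `a = c²` and the line is the axis `c = 0`, while
`φ₁(s) = (s², s)` and `φ₂(u) = (-u, 0)`. The chord of the parabola through `(s², s)` and `(t², t)`
meets the axis at `(-st, 0)`. -/

open Complex (I I_sq)

section Projectivization

variable {K V ι : Type*}

theorem linearIndependent_rep_mk_iff [DivisionRing K] [AddCommGroup V] [Module K V] {v : ι → V}
    (hv : ∀ i, v i ≠ 0) :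
    LinearIndependent K (fun i ↦ (Projectivization.mk K (v i) (hv i)).rep) ↔
      LinearIndependent K v := by
  choose a ha using fun i ↦ Projectivization.exists_smul_eq_mk_rep K (v i) (hv i)
  simp only [← ha]
  exact LinearIndependent.units_smul_iff v a

theorem rep_mk_iff [DivisionRing K] [AddCommGroup V] [Module K V] {P : V → Prop}
    (hP : ∀ (a : Kˣ) (v : V), P (a • v) ↔ P v) {v : V} (hv : v ≠ 0) :
    P (Projectivization.mk K v hv).rep ↔ P v := by
  obtain ⟨a, ha⟩ := Projectivization.exists_smul_eq_mk_rep K v hv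
  rw [← ha, hP]

theorem dependent_mk_iff_det_eq_zero [Field K] [Fintype ι] [DecidableEq ι] {v : ι → ι → K}
    (hv : ∀ i, v i ≠ 0) :
    Projectivization.Dependent (fun i ↦ Projectivization.mk K (v i) (hv i)) ↔
      (Matrix.of v).det = 0 := by
  have independent_iff_det_ne_zero : LinearIndependent K v ↔ (Matrix.of v).det ≠ 0 := by
    rw [← isUnit_iff_ne_zero, ← Matrix.isUnit_iff_isUnit_det]
    exact Matrix.linearIndependent_rows_iff_isUnit
  rw [Projectivization.dependent_iff, ← not_ne_iff (b := (0 : K)), ← independent_iff_det_ne_zero]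
  exact (linearIndependent_rep_mk_iff hv).not

end Projectivization

theorem collin_iff_dependent (p q r : P2) :
    Collin p q r ↔ Projectivization.Dependent ![p, q, r] := by
  have range_rep : Set.range (Projectivization.rep ∘ ![p, q, r]) = {p.rep, q.rep, r.rep} := by
    ext v
    simp [Fin.exists_fin_succ, eq_comm]
  rw [Projectivization.dependent_iff, linearIndependent_iff_card_le_finrank_span, Set.finrank,
    range_rep, Fintype.card_fin, not_le, Nat.lt_succ_iff, Collin]

theorem mk_mem_conicQ_iff {v : Fin 3 → ℂ} (hv : v ≠ 0) :
    Projectivization.mk ℂ v hv ∈ conicQ ↔ v 0 ^ 2 + v 1 ^ 2 - v 2 ^ 2 = 0 :=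
  rep_mk_iff (P := fun w : Fin 3 → ℂ ↦ w 0 ^ 2 + w 1 ^ 2 - w 2 ^ 2 = 0)
    (fun (a : ℂˣ) w ↦ by simp [Units.smul_def, mul_pow, ← mul_add, ← mul_sub]) hv

theorem mk_mem_lineZ_iff {v : Fin 3 → ℂ} (hv : v ≠ 0) :
    Projectivization.mk ℂ v hv ∈ lineZ ↔ v 2 = 0 :=
  rep_mk_iff (P := fun w : Fin 3 → ℂ ↦ w 2 = 0) (fun (a : ℂˣ) w ↦ by simp [Units.smul_def]) hv

theorem parabolaChart_vec_ne_zero (a c : ℂ) : ![1 + a, I * (1 - a), 2 * c] ≠ 0 := by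
  intro h
  have h₀ : 1 + a = 0 := congrFun h 0
  have h₁ : I * (1 - a) = 0 := congrFun h 1
  exact two_ne_zero (α := ℂ) (by linear_combination h₀ - I * h₁ + (1 - a) * I_sq)

/-- The point with affine coordinates `(a, c)` in the complement of the tangent `x = iy` to the
conic, where `a = (x + iy) / (x - iy)` and `c = z / (x - iy)`; the vector representing it is
normalized by `x - iy = 2`. -/
noncomputable def parabolaChart (a c : ℂ) : P2 :=
  Projectivization.mk ℂ ![1 + a, I * (1 - a), 2 * c] (parabolaChart_vec_ne_zero a c)

theorem mk_eq_parabolaChart_iff {v : Fin 3 → ℂ} (hv : v ≠ 0) (a c : ℂ) :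
    Projectivization.mk ℂ v hv = parabolaChart a c ↔
      v 0 + I * v 1 = a * (v 0 - I * v 1) ∧ v 2 = c * (v 0 - I * v 1) := by
  rw [parabolaChart, Projectivization.mk_eq_mk_iff']
  constructor
  · rintro ⟨k, rfl⟩
    simp only [Pi.smul_apply, smul_eq_mul, Matrix.cons_val]
    constructor
    · linear_combination k * (1 - a) * (1 + a) * I_sq
    · linear_combination c * k * (1 - a) * I_sq
  · rintro ⟨ha, hc⟩
    refine ⟨(v 0 - I * v 1) / 2, funext fun j ↦ ?_⟩
    fin_cases j <;> simp only [Pi.smul_apply, smul_eq_mul, Matrix.cons_val, Fin.reduceFinMk,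
      Fin.zero_eta, Fin.mk_one]
    · linear_combination -ha / 2
    · linear_combination I / 2 * ha - v 1 * I_sq
    · linear_combination -hc

theorem parabolaChart_inj {a c a' c' : ℂ} :
    parabolaChart a c = parabolaChart a' c' ↔ a = a' ∧ c = c' := by
  have denom : 1 + a - I * (I * (1 - a)) = 2 := by linear_combination (a - 1) * I_sq
  have numer : 1 + a + I * (I * (1 - a)) = 2 * a := by linear_combination (1 - a) * I_sq
  rw [parabolaChart, mk_eq_parabolaChart_iff]
  simp [denom, numer, mul_comm (2 : ℂ)]

theorem parabolaChart_mem_conicQ_iff {a c : ℂ} : parabolaChart a c ∈ conicQ ↔ a = c ^ 2 := by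
  have quadric_eq : (1 + a) ^ 2 + (I * (1 - a)) ^ 2 - (2 * c) ^ 2 = 4 * (a - c ^ 2) := by
    linear_combination (1 - a) ^ 2 * I_sq
  rw [parabolaChart, mk_mem_conicQ_iff]
  simp [quadric_eq, sub_eq_zero]

theorem parabolaChart_mem_lineZ_iff {a c : ℂ} : parabolaChart a c ∈ lineZ ↔ c = 0 := by
  rw [parabolaChart, mk_mem_lineZ_iff]
  simp

theorem exists_eq_parabolaChart {p : P2} (hp : ¬(p ∈ conicQ ↔ p ∈ lineZ)) :
    ∃ a c, p = parabolaChart a c := by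
  induction p using Projectivization.ind with | h v hv =>
  have denom_ne_zero : v 0 - I * v 1 ≠ 0 := by
    intro h
    have restrict_tangent : v 0 ^ 2 + v 1 ^ 2 - v 2 ^ 2 = -v 2 ^ 2 := by
      linear_combination (v 0 + I * v 1) * h + v 1 ^ 2 * I_sq
    apply hp
    rw [mk_mem_conicQ_iff, mk_mem_lineZ_iff, restrict_tangent, neg_eq_zero, sq_eq_zero_iff]
  exact ⟨_, _, (mk_eq_parabolaChart_iff hv _ _).mpr
    ⟨(div_mul_cancel₀ _ denom_ne_zero).symm, (div_mul_cancel₀ _ denom_ne_zero).symm⟩⟩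

theorem collin_parabolaChart_iff {a₁ c₁ a₂ c₂ a₃ c₃ : ℂ} :
    Collin (parabolaChart a₁ c₁) (parabolaChart a₂ c₂) (parabolaChart a₃ c₃) ↔
      (a₂ - a₁) * (c₃ - c₁) = (a₃ - a₁) * (c₂ - c₁) := by
  let a := ![a₁, a₂, a₃]
  let c := ![c₁, c₂, c₃]
  let v (i : Fin 3) : Fin 3 → ℂ := ![1 + a i, I * (1 - a i), 2 * c i]
  have points_eq : ![parabolaChart a₁ c₁, parabolaChart a₂ c₂, parabolaChart a₃ c₃] =
      fun i ↦ Projectivization.mk ℂ (v i) (parabolaChart_vec_ne_zero (a i) (c i)) := by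
    ext i
    fin_cases i <;> rfl
  have det_eq : (Matrix.of v).det =
      -4 * I * ((a₂ - a₁) * (c₃ - c₁) - (a₃ - a₁) * (c₂ - c₁)) := by
    rw [Matrix.det_fin_three]
    simp only [v, a, c, Matrix.of_apply, Matrix.cons_val]
    ring
  rw [collin_iff_dependent, points_eq, dependent_mk_iff_det_eq_zero, det_eq]
  simp [sub_eq_zero]

theorem conicParam_eq_parabolaChart (s : ℂˣ) :
    conicParam s = parabolaChart ((s : ℂ) ^ 2) s :=
  rfl

theorem lineZParam_eq_parabolaChart (u : ℂˣ) : lineZParam u = parabolaChart (-(u : ℂ)) 0 := by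
  simp [lineZParam, parabolaChart, ← sub_eq_add_neg]

theorem conicParam_injective : Function.Injective conicParam := fun s t h ↦ by
  simp only [conicParam_eq_parabolaChart, parabolaChart_inj] at h
  exact Units.ext h.2

theorem lineZParam_injective : Function.Injective lineZParam := fun u w h ↦ by
  simp only [lineZParam_eq_parabolaChart, parabolaChart_inj] at h
  exact Units.ext (neg_injective h.1)

theorem range_conicParam : Set.range conicParam = conicQ \ lineZ := by
  refine Set.Subset.antisymm ?_ fun p ⟨hQ, hL⟩ ↦ ?_
  · rintro _ ⟨s, rfl⟩
    simp [conicParam_eq_parabolaChart, parabolaChart_mem_conicQ_iff, parabolaChart_mem_lineZ_iff]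
  · obtain ⟨a, c, rfl⟩ := exists_eq_parabolaChart fun h ↦ hL (h.mp hQ)
    rw [parabolaChart_mem_conicQ_iff] at hQ
    rw [parabolaChart_mem_lineZ_iff] at hL
    exact ⟨Units.mk0 c hL, by rw [conicParam_eq_parabolaChart, hQ, Units.val_mk0]⟩

theorem range_lineZParam : Set.range lineZParam = lineZ \ conicQ := by
  refine Set.Subset.antisymm ?_ fun p ⟨hL, hQ⟩ ↦ ?_
  · rintro _ ⟨u, rfl⟩
    simp [lineZParam_eq_parabolaChart, parabolaChart_mem_conicQ_iff, parabolaChart_mem_lineZ_iff]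
  · obtain ⟨a, c, rfl⟩ := exists_eq_parabolaChart fun h ↦ hQ (h.mpr hL)
    rw [parabolaChart_mem_lineZ_iff] at hL
    subst hL
    rw [parabolaChart_mem_conicQ_iff, zero_pow two_ne_zero] at hQ
    exact ⟨Units.mk0 (-a) (neg_ne_zero.mpr hQ), by
      rw [lineZParam_eq_parabolaChart, Units.val_mk0, neg_neg]⟩

theorem collin_conicParam_lineZParam_iff {s t : ℂˣ} (hst : s ≠ t) (u : ℂˣ) :
    Collin (conicParam s) (conicParam t) (lineZParam u) ↔ u = s * t := by
  have t_sub_s_ne_zero : (t - s : ℂ) ≠ 0 := sub_ne_zero.mpr (Units.val_injective.ne hst.symm)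
  have chord_eq : ((t : ℂ) ^ 2 - s ^ 2) * (0 - s) - (-u - (s : ℂ) ^ 2) * (t - s) =
      (t - s) * (u - s * t) := by ring
  rw [conicParam_eq_parabolaChart, conicParam_eq_parabolaChart, lineZParam_eq_parabolaChart,
    collin_parabolaChart_iff, ← sub_eq_zero, chord_eq, mul_eq_zero, or_iff_right t_sub_s_ne_zero,
    sub_eq_zero, Units.ext_iff, Units.val_mul]

/-- φ₁ and φ₂ are bijections of ℂ* onto Q⁰ and L⁰ respectively, and for
s ≠ t and any u, the points φ₁ s, φ₁ t, φ₂ u are collinear iff u = s·t: collinearity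
gives a pairing Q⁰ × Q⁰ → L⁰ corresponding to multiplication in ℂ*. -/
theorem conic_plus_secant_line_pairing :
    Function.Injective conicParam ∧ Set.range conicParam = conicQ \ lineZ ∧
    Function.Injective lineZParam ∧ Set.range lineZParam = lineZ \ conicQ ∧
      ∀ s t : ℂˣ, s ≠ t → ∀ u : ℂˣ,
        (Collin (conicParam s) (conicParam t) (lineZParam u) ↔ u = s * t) := by
  exact ⟨conicParam_injective, range_conicParam, lineZParam_injective, range_lineZParam,
    fun _ _ hst u ↦ collin_conicParam_lineZParam_iff hst u⟩
end
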